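/- arXiv:1309.6693 — 2 statements merged into one kernel-verified Lean document; each statement's English description precedes it below -/
import Mathlib

section
/- (Theorem 5.1, convergence part) If σx is bounded on [0,∞), then e(t) → 0, e_L(t) → 0, and x̃(t) → 0 as t → ∞; consequently the plant state converges to the ideal reference state: x(t) − x_ri(t) = e(t) + x̃(t) → 0 as t → ∞. -/
open Matrix Filter

noncomputable section

/-- Euclidean norm ‖·‖₂ of a vector. -/
def norm2 {n : ℕ} (v : Fin n → ℝ) : ℝ := Real.sqrt (∑ i, v i ^ 2)

/-- Supremum (infinity) norm ‖·‖_∞ of a vector (the sup norm on `Fin n → ℝ`). -/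
def normInf {n : ℕ} (v : Fin n → ℝ) : ℝ := ‖v‖

/-- Frobenius norm ‖·‖_F of a matrix. -/
def normF {N m : ℕ} (W : Matrix (Fin N) (Fin m) ℝ) : ℝ := Real.sqrt (∑ i, ∑ j, W i j ^ 2)

/-- Smallest eigenvalue λ_min of a real symmetric (Hermitian) matrix. -/
def lamMin {n : ℕ} {A : Matrix (Fin n) (Fin n) ℝ} (hA : A.IsHermitian) : ℝ := ⨅ i, hA.eigenvalues i

/-- Largest eigenvalue λ_max of a real symmetric (Hermitian) matrix. -/
def lamMax {n : ℕ} {A : Matrix (Fin n) (Fin n) ℝ} (hA : A.IsHermitian) : ℝ := ⨆ i, hA.eigenvalues i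

/-- A real square matrix is Hurwitz if every (complex) eigenvalue has negative real part. -/
def Hurwitz {n : ℕ} (A : Matrix (Fin n) (Fin n) ℝ) : Prop :=
  ∀ μ : ℂ, (A.map Complex.ofReal).charpoly.IsRoot μ → μ.re < 0

/-- The Lyapunov function V(e, W̃) = eᵀ P e + γ⁻¹ tr((W̃ Λ^{1/2})ᵀ (W̃ Λ^{1/2})). -/
def Vlyap {n N m : ℕ} (γ : ℝ) (P : Matrix (Fin n) (Fin n) ℝ)
    (Lhalf : Matrix (Fin m) (Fin m) ℝ) (e : Fin n → ℝ) (W : Matrix (Fin N) (Fin m) ℝ) : ℝ :=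
  e ⬝ᵥ (P *ᵥ e) + γ⁻¹ * ((W * Lhalf)ᵀ * (W * Lhalf)).trace

/-- The augmented Lyapunov function V* of Theorem 5.1. -/
def Vstar {n N m : ℕ} (γ κ η ξ : ℝ) (P R : Matrix (Fin n) (Fin n) ℝ)
    (hP : P.IsHermitian) (hR : R.IsHermitian)
    (Lhalf : Matrix (Fin m) (Fin m) ℝ)
    (e : Fin n → ℝ) (W : Matrix (Fin N) (Fin m) ℝ) (eL xt : Fin n → ℝ) : ℝ :=
  Vlyap γ P Lhalf e W + η⁻¹ * κ * (eL ⬝ᵥ (P *ᵥ eL))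
    + 2 * ξ * κ⁻¹ * (lamMax hP)⁻¹ * lamMin hR * (xt ⬝ᵥ (P *ᵥ xt))

lemma dotProduct_mulVec_comm_of_isHermitian {n : ℕ} {P : Matrix (Fin n) (Fin n) ℝ}
    (hP : P.IsHermitian) (x y : Fin n → ℝ) : x ⬝ᵥ (P *ᵥ y) = y ⬝ᵥ (P *ᵥ x) := by
  have hT : Pᵀ = P := by simpa [conjTranspose_eq_transpose_of_trivial] using hP.eq
  rw [dotProduct_mulVec, ← mulVec_transpose, hT, dotProduct_comm]

lemma exists_quadForm_le {n : ℕ} (M : Matrix (Fin n) (Fin n) ℝ) :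
    ∃ L > 0, ∀ v : Fin n → ℝ, v ⬝ᵥ (M *ᵥ v) ≤ L * (v ⬝ᵥ v) := by
  refine ⟨(∑ i, ∑ j, |M i j|) + 1, by positivity, fun v => ?_⟩
  have hvv : 0 ≤ v ⬝ᵥ v := Finset.sum_nonneg fun i _ => mul_self_nonneg _
  have hsq : ∀ i, v i * v i ≤ v ⬝ᵥ v := fun i =>
    Finset.single_le_sum (f := fun i => v i * v i) (fun i _ => mul_self_nonneg _)
      (Finset.mem_univ i)
  have hle : v ⬝ᵥ (M *ᵥ v) ≤ (∑ i, ∑ j, |M i j|) * (v ⬝ᵥ v) := by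
    simp only [Finset.sum_mul]
    simp only [dotProduct, mulVec, Finset.mul_sum]
    refine Finset.sum_le_sum fun i _ => Finset.sum_le_sum fun j _ => ?_
    rw [← Finset.mul_sum]
    change v i * (M i j * v j) ≤ |M i j| * (v ⬝ᵥ v)
    have hij : |v i * v j| ≤ v ⬝ᵥ v := by
      rw [abs_le]
      constructor <;>
        nlinarith [hsq i, hsq j, sq_nonneg (v i + v j), sq_nonneg (v i - v j)]
    calc v i * (M i j * v j) = M i j * (v i * v j) := by ring
      _ ≤ |M i j * (v i * v j)| := le_abs_self _
      _ = |M i j| * |v i * v j| := abs_mul _ _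
      _ ≤ _ := by gcongr
  linarith

lemma Matrix.PosDef.exists_le_quadForm {n : ℕ} {M : Matrix (Fin n) (Fin n) ℝ} (hM : M.PosDef) :
    ∃ r > 0, ∀ v : Fin n → ℝ, r * (v ⬝ᵥ v) ≤ v ⬝ᵥ (M *ᵥ v) := by
  obtain ⟨L, hL, hinv⟩ := exists_quadForm_le M⁻¹
  refine ⟨L⁻¹, by positivity, fun v => ?_⟩
  have hMM : M *ᵥ (M⁻¹ *ᵥ v) = v := by
    rw [mulVec_mulVec, mul_nonsing_inv M ((isUnit_iff_isUnit_det M).1 hM.isUnit), one_mulVec]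
  have h0 : 0 ≤ (v - L⁻¹ • (M⁻¹ *ᵥ v)) ⬝ᵥ (M *ᵥ (v - L⁻¹ • (M⁻¹ *ᵥ v))) := by
    simpa using hM.posSemidef.dotProduct_mulVec_nonneg (v - L⁻¹ • (M⁻¹ *ᵥ v))
  have hcomm := dotProduct_mulVec_comm_of_isHermitian hM.isHermitian (M⁻¹ *ᵥ v) v
  rw [mulVec_sub, mulVec_smul, hMM] at h0
  rw [hMM] at hcomm
  simp only [sub_dotProduct, dotProduct_sub, smul_dotProduct, dotProduct_smul, smul_eq_mul,
    hcomm] at h0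
  have hv := hinv v
  rw [dotProduct_comm] at hv
  have hb : L⁻¹ * (L⁻¹ * (M⁻¹ *ᵥ v ⬝ᵥ v)) ≤ L⁻¹ * (v ⬝ᵥ v) := by
    have : L⁻¹ * (M⁻¹ *ᵥ v ⬝ᵥ v) ≤ v ⬝ᵥ v := by
      rw [inv_mul_le_iff₀ hL]; exact hv
    gcongr
  linarith

lemma HasDerivAt.quadForm {n : ℕ} {P : Matrix (Fin n) (Fin n) ℝ} (hP : P.IsHermitian)
    {x : ℝ → Fin n → ℝ} {x' : Fin n → ℝ} {t : ℝ} (hx : HasDerivAt x x' t) :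
    HasDerivAt (fun s => x s ⬝ᵥ (P *ᵥ x s)) (2 * (x t ⬝ᵥ (P *ᵥ x'))) t := by
  have hxi := hasDerivAt_pi.1 hx
  have h : HasDerivAt (fun s => x s ⬝ᵥ (P *ᵥ x s)) (x' ⬝ᵥ (P *ᵥ x t) + x t ⬝ᵥ (P *ᵥ x')) t := by
    simp only [dotProduct, mulVec, ← Finset.sum_add_distrib]
    exact HasDerivAt.fun_sum fun i _ =>
      (hxi i).mul (HasDerivAt.fun_sum fun j _ => (hxi j).const_mul (P i j))
  rw [dotProduct_mulVec_comm_of_isHermitian hP x'] at h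
  simpa [two_mul] using h

lemma two_mul_quadForm_of_lyapunov {n : ℕ} {A P R : Matrix (Fin n) (Fin n) ℝ}
    (hP : P.IsHermitian) (hLyap : Aᵀ * P + P * A + R = 0) (x : Fin n → ℝ) :
    2 * (x ⬝ᵥ (P *ᵥ (A *ᵥ x))) = -(x ⬝ᵥ (R *ᵥ x)) := by
  have h := congrArg (fun M => x ⬝ᵥ (M *ᵥ x)) hLyap
  simp only [add_mulVec, dotProduct_add, zero_mulVec, dotProduct_zero, ← mulVec_mulVec] at h
  have hT : x ⬝ᵥ (Aᵀ *ᵥ (P *ᵥ x)) = x ⬝ᵥ (P *ᵥ (A *ᵥ x)) := by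
    rw [dotProduct_mulVec, vecMul_transpose, dotProduct_mulVec_comm_of_isHermitian hP]
  linarith

lemma dotProduct_mulVec_diag_transpose {n N m : ℕ} (P : Matrix (Fin n) (Fin n) ℝ)
    (B : Matrix (Fin n) (Fin m) ℝ) {D : Matrix (Fin m) (Fin m) ℝ} (hD : D.IsDiag)
    (W : Matrix (Fin N) (Fin m) ℝ) (x : Fin n → ℝ) (s : Fin N → ℝ) :
    x ⬝ᵥ (P *ᵥ ((B * D * Wᵀ) *ᵥ s)) =
      ∑ i, ∑ j, D j j * (W i j * (s i * (x ᵥ* (P * B)) j)) := by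
  obtain ⟨d, rfl⟩ : ∃ d, D = diagonal d := ⟨_, hD.diagonal_diag.symm⟩
  have h : x ⬝ᵥ (P *ᵥ ((B * diagonal d * Wᵀ) *ᵥ s)) =
      (x ᵥ* (P * B)) ⬝ᵥ (diagonal d *ᵥ (Wᵀ *ᵥ s)) := by
    rw [← dotProduct_mulVec]
    simp only [mulVec_mulVec, Matrix.mul_assoc]
  rw [h, Finset.sum_comm]
  simp only [dotProduct, mulVec_diagonal]
  refine Finset.sum_congr rfl fun j _ => ?_
  simp only [mulVec, dotProduct, Finset.mul_sum, diagonal_apply_eq, transpose_apply]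
  exact Finset.sum_congr rfl fun i _ => by ring

lemma antitoneOn_Ici_of_hasDerivAt_nonpos {V V' : ℝ → ℝ} {a : ℝ}
    (hV : ∀ t ≥ a, HasDerivAt V (V' t) t) (hV' : ∀ t ≥ a, V' t ≤ 0) :
    AntitoneOn V (Set.Ici a) := by
  refine antitoneOn_of_deriv_nonpos (convex_Ici a)
    (fun t ht => (hV t ht).continuousAt.continuousWithinAt)
    (fun t ht => (hV t (interior_subset ht)).differentiableAt.differentiableWithinAt)
    fun t ht => ?_
  rw [(hV t (interior_subset ht)).deriv]
  exact hV' t (interior_subset ht)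

/-- A form of Barbalat's lemma. -/
lemma tendsto_zero_of_deriv_le_neg {V V' f f' : ℝ → ℝ} {K : ℝ}
    (hV : ∀ t ≥ 0, HasDerivAt V (V' t) t) (hV0 : ∀ t ≥ 0, 0 ≤ V t)
    (hVf : ∀ t ≥ 0, V' t ≤ -f t) (hf0 : ∀ t ≥ 0, 0 ≤ f t)
    (hf : ∀ t ≥ 0, HasDerivAt f (f' t) t) (hK : ∀ t ≥ 0, |f' t| ≤ K) :
    Tendsto f atTop (nhds 0) := by
  have hanti : AntitoneOn V (Set.Ici 0) := antitoneOn_Ici_of_hasDerivAt_nonpos hV fun t ht => by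
    linarith [hVf t ht, hf0 t ht]
  obtain ⟨l, hl⟩ : ∃ l, Tendsto V atTop (nhds l) := by
    have hanti' : Antitone fun t => V (max t 0) := fun a b hab =>
      hanti (le_max_right a 0) (le_max_right b 0) (max_le_max_right 0 hab)
    refine ⟨_, (tendsto_atTop_ciInf hanti' ⟨0, ?_⟩).congr' ?_⟩
    · rintro _ ⟨t, rfl⟩
      exact hV0 _ (le_max_right t 0)
    · filter_upwards [eventually_ge_atTop 0] with t ht
      rw [max_eq_left ht]
  have hK0 : 0 ≤ K := (abs_nonneg _).trans (hK 0 le_rfl)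
  have key : ∀ δ > 0, ∀ t ≥ 0, δ * (f t - K * δ) ≤ V t - V (t + δ) := by
    intro δ hδ t ht
    have hlow : ∀ s ∈ Set.Icc t (t + δ), f t - K * δ ≤ f s := by
      intro s hs
      have h := (convex_Ici (0 : ℝ)).norm_image_sub_le_of_norm_hasDerivWithin_le
        (fun u hu => (hf u hu).hasDerivWithinAt) hK (Set.mem_Ici.2 ht)
        (Set.mem_Ici.2 (ht.le.trans hs.1))
      rw [Real.norm_eq_abs, Real.norm_eq_abs, abs_of_nonneg (sub_nonneg.2 hs.1)] at h
      have h1 : K * (s - t) ≤ K * δ := by gcongr; linarith [hs.2]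
      linarith [(abs_le.1 h).1]
    obtain ⟨s, hs, hs'⟩ := exists_hasDerivAt_eq_slope V V' (show t < t + δ by linarith)
      (fun s hs => (hV s (ht.le.trans hs.1)).continuousAt.continuousWithinAt)
      (fun s hs => hV s (ht.le.trans hs.1.le))
    rw [add_sub_cancel_left, eq_div_iff hδ.ne'] at hs'
    have h1 := hlow s (Set.Ioo_subset_Icc_self hs)
    have h2 := hVf s (ht.le.trans hs.1.le)
    have h3 : (f t - K * δ) * δ ≤ -V' s * δ := by gcongr; linarith
    linarith
  rw [Metric.tendsto_atTop]
  intro ε hε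
  obtain ⟨δ, hδ, hKδ⟩ : ∃ δ > 0, K * δ ≤ ε / 2 := by
    refine ⟨ε / (2 * (K + 1)), by positivity, ?_⟩
    rw [mul_div_assoc', div_le_div_iff₀ (by positivity) (by positivity)]
    nlinarith
  have hdiff : Tendsto (fun t => V t - V (t + δ)) atTop (nhds 0) := by
    simpa using hl.sub (hl.comp (tendsto_atTop_add_const_right atTop δ tendsto_id))
  obtain ⟨T, hT⟩ := eventually_atTop.1
    ((hdiff.eventually (gt_mem_nhds (show 0 < δ * (ε / 2) by positivity))).and
      (eventually_ge_atTop 0))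
  refine ⟨T, fun t ht => ?_⟩
  obtain ⟨h1, h2⟩ := hT t ht
  have h3 : f t - K * δ < ε / 2 := lt_of_mul_lt_mul_left ((key δ hδ t h2).trans_lt h1) hδ.le
  rw [Real.dist_0_eq_abs, abs_of_nonneg (hf0 t h2)]
  linarith

lemma norm_le_of_dotProduct_self_le {n : ℕ} {v : Fin n → ℝ} {C : ℝ} (h : v ⬝ᵥ v ≤ C) :
    ‖v‖ ≤ √C := by
  refine (pi_norm_le_iff_of_nonneg (Real.sqrt_nonneg _)).2 fun i => ?_
  rw [Real.norm_eq_abs]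
  refine Real.abs_le_sqrt (le_trans ?_ h)
  rw [sq]
  exact Finset.single_le_sum (f := fun i => v i * v i) (fun i _ => mul_self_nonneg _)
    (Finset.mem_univ i)

lemma tendsto_zero_of_dotProduct_self_le {n : ℕ} {x : ℝ → Fin n → ℝ} {f : ℝ → ℝ}
    (h : ∀ t, x t ⬝ᵥ x t ≤ f t) (hf : Tendsto f atTop (nhds 0)) :
    Tendsto x atTop (nhds 0) := by
  refine squeeze_zero_norm (fun t => norm_le_of_dotProduct_self_le (h t)) ?_
  simpa using hf.sqrt

theorem statement7
    {n N m : ℕ} (hn : 0 < n) (hN : 0 < N) (hm : 0 < m)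
    (Ar : Matrix (Fin n) (Fin n) ℝ) (B : Matrix (Fin n) (Fin m) ℝ)
    (Lam Lhalf : Matrix (Fin m) (Fin m) ℝ) (R P : Matrix (Fin n) (Fin n) ℝ)
    (hAr : Hurwitz Ar)
    (hLam : Lam.PosDef) (hLamDiag : Lam.IsDiag)
    (hLhalfDiag : Lhalf.IsDiag) (hLhalfSq : Lhalf * Lhalf = Lam)
    (hR : R.PosDef) (hP : P.PosDef)
    (hLyap : Arᵀ * P + P * Ar + R = 0)
    (γ κ η ξ : ℝ) (hγ : 0 < γ) (hκ : 0 < κ) (hη : 0 < η) (hξ0 : 0 < ξ) (hξ1 : ξ < 1)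
    (σx : ℝ → Fin N → ℝ)
    (e eL xt : ℝ → Fin n → ℝ) (Wt : ℝ → Matrix (Fin N) (Fin m) ℝ)
    (heL0 : eL 0 = 0) (hxt0 : xt 0 = 0)
    (he : ∀ t ≥ (0:ℝ), HasDerivAt e
          (Ar *ᵥ e t - (B * Lam * (Wt t)ᵀ) *ᵥ σx t - κ • (e t - eL t)) t)
    (hW : ∀ t ≥ (0:ℝ), ∀ i j, HasDerivAt (fun s => Wt s i j)
          (γ * (σx t i * ((e t) ᵥ* (P * B)) j)) t)
    (heL : ∀ t ≥ (0:ℝ), HasDerivAt eL (Ar *ᵥ eL t + η • (e t - eL t)) t)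
    (hxt : ∀ t ≥ (0:ℝ), HasDerivAt xt (Ar *ᵥ xt t + κ • (e t - eL t)) t)
    (hσ : ∃ C : ℝ, ∀ t ≥ (0:ℝ), norm2 (σx t) ≤ C)
    : Tendsto e atTop (nhds 0) ∧ Tendsto eL atTop (nhds 0) ∧ Tendsto xt atTop (nhds 0)
      ∧ Tendsto (fun t => e t + xt t) atTop (nhds 0) := by
  obtain ⟨r, hr, hRr⟩ := hR.exists_le_quadForm
  obtain ⟨p, hp, hPp⟩ := hP.exists_le_quadForm
  obtain ⟨L, hL, hPL⟩ := exists_quadForm_le P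
  have hLam0 : ∀ j, 0 < Lam j j := fun j => hLam.diag_pos
  have hnn : ∀ {k : ℕ} (v : Fin k → ℝ), 0 ≤ v ⬝ᵥ v := fun v =>
    Finset.sum_nonneg fun i _ => mul_self_nonneg _
  have hPnn : ∀ v : Fin n → ℝ, 0 ≤ v ⬝ᵥ (P *ᵥ v) := fun v =>
    (mul_nonneg hp.le (hnn v)).trans (hPp v)
  set s : ℝ := r / (2 * κ * L) with hs
  have hs0 : 0 < s := by positivity
  have hsL : κ * s * L = r / 2 := by rw [hs]; field_simp
  set V : ℝ → ℝ := fun t => e t ⬝ᵥ (P *ᵥ e t) + γ⁻¹ * (∑ i, ∑ j, Lam j j * Wt t i j ^ 2)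
    + κ / η * (eL t ⬝ᵥ (P *ᵥ eL t)) + 2 * s * (xt t ⬝ᵥ (P *ᵥ xt t)) with hVdef
  set e' : ℝ → Fin n → ℝ := fun t =>
    Ar *ᵥ e t - (B * Lam * (Wt t)ᵀ) *ᵥ σx t - κ • (e t - eL t) with he'
  set eL' : ℝ → Fin n → ℝ := fun t => Ar *ᵥ eL t + η • (e t - eL t) with heL'
  set xt' : ℝ → Fin n → ℝ := fun t => Ar *ᵥ xt t + κ • (e t - eL t) with hxt'
  set V' : ℝ → ℝ := fun t => 2 * (e t ⬝ᵥ (P *ᵥ e' t))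
    + γ⁻¹ * (∑ i, ∑ j, Lam j j * (2 * Wt t i j * (γ * (σx t i * ((e t) ᵥ* (P * B)) j))))
    + κ / η * (2 * (eL t ⬝ᵥ (P *ᵥ eL' t))) + 2 * s * (2 * (xt t ⬝ᵥ (P *ᵥ xt' t))) with hV'def
  have hV : ∀ t ≥ 0, HasDerivAt V (V' t) t := by
    intro t ht
    refine ((((he t ht).quadForm hP.isHermitian).add (HasDerivAt.const_mul _ ?_)).add
      (((heL t ht).quadForm hP.isHermitian).const_mul _)).add
      (((hxt t ht).quadForm hP.isHermitian).const_mul _)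
    refine HasDerivAt.fun_sum fun i _ => HasDerivAt.fun_sum fun j _ => ?_
    simpa using ((hW t ht i j).pow 2).const_mul (Lam j j)
  set q : ℝ := min r (min (κ / η * r) (s * r)) with hq
  have hq0 : 0 < q := by positivity
  set f : ℝ → ℝ := fun t => e t ⬝ᵥ e t + eL t ⬝ᵥ eL t + xt t ⬝ᵥ xt t with hfdef
  have hf0 : ∀ t, 0 ≤ f t := fun t => by
    have := hnn (e t); have := hnn (eL t); have := hnn (xt t)
    positivity
  have hVf : ∀ t, V' t ≤ -(q * f t) := by
    intro t
    have hcancel := dotProduct_mulVec_diag_transpose P B hLamDiag (Wt t) (e t) (σx t)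
    have hsum : γ⁻¹ * (∑ i, ∑ j, Lam j j *
        (2 * Wt t i j * (γ * (σx t i * ((e t) ᵥ* (P * B)) j)))) =
        2 * (e t ⬝ᵥ (P *ᵥ ((B * Lam * (Wt t)ᵀ) *ᵥ σx t))) := by
      rw [hcancel]
      simp only [Finset.mul_sum]
      refine Finset.sum_congr rfl fun i _ => Finset.sum_congr rfl fun j _ => ?_
      field_simp
    have h1 := two_mul_quadForm_of_lyapunov hP.isHermitian hLyap (e t)
    have h2 := two_mul_quadForm_of_lyapunov hP.isHermitian hLyap (eL t)
    have h3 := two_mul_quadForm_of_lyapunov hP.isHermitian hLyap (xt t)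
    set d := e t - eL t with hd
    have hY := hPnn (s • xt t - d)
    have hdd : d ⬝ᵥ (P *ᵥ d) = e t ⬝ᵥ (P *ᵥ d) - eL t ⬝ᵥ (P *ᵥ d) := by
      rw [hd, sub_dotProduct]
    have hcomm := dotProduct_mulVec_comm_of_isHermitian hP.isHermitian d (xt t)
    simp only [mulVec_sub, mulVec_smul, sub_dotProduct, dotProduct_sub, smul_dotProduct,
      dotProduct_smul, smul_eq_mul, hcomm] at hY
    have hx1 : s * s * κ * 2 * (xt t ⬝ᵥ (P *ᵥ xt t)) ≤ s * r * (xt t ⬝ᵥ xt t) := by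
      calc s * s * κ * 2 * (xt t ⬝ᵥ (P *ᵥ xt t))
          ≤ s * s * κ * 2 * (L * (xt t ⬝ᵥ xt t)) := by gcongr; exact hPL _
        _ = 2 * s * (κ * s * L) * (xt t ⬝ᵥ xt t) := by ring
        _ = _ := by rw [hsL]; ring
    have hV'eq : V' t = -(e t ⬝ᵥ (R *ᵥ e t)) - κ / η * (eL t ⬝ᵥ (R *ᵥ eL t))
        - 2 * κ * (d ⬝ᵥ (P *ᵥ d)) - 2 * s * (xt t ⬝ᵥ (R *ᵥ xt t))
        + 4 * s * κ * (xt t ⬝ᵥ (P *ᵥ d)) := by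
      have hκη : κ / η * η = κ := div_mul_cancel₀ κ hη.ne'
      simp only [hV'def, he', heL', hxt', hsum, hdd]
      rw [← hd]
      simp only [mulVec_sub P (_ - _), mulVec_sub P (_ *ᵥ _), mulVec_add, mulVec_smul,
        dotProduct_sub, dotProduct_add, dotProduct_smul, smul_eq_mul]
      linear_combination h1 + κ / η * h2 + 2 * s * h3 + 2 * (eL t ⬝ᵥ (P *ᵥ d)) * hκη
    have hq1 : q * (e t ⬝ᵥ e t) ≤ e t ⬝ᵥ (R *ᵥ e t) :=
      (mul_le_mul_of_nonneg_right (min_le_left _ _) (hnn _)).trans (hRr _)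
    have hq2 : q * (eL t ⬝ᵥ eL t) ≤ κ / η * (eL t ⬝ᵥ (R *ᵥ eL t)) := by
      refine (mul_le_mul_of_nonneg_right
        ((min_le_right _ _).trans (min_le_left _ _)) (hnn _)).trans ?_
      rw [mul_assoc]
      exact mul_le_mul_of_nonneg_left (hRr _) (by positivity)
    have hq3 : q * (xt t ⬝ᵥ xt t) ≤ s * r * (xt t ⬝ᵥ xt t) :=
      mul_le_mul_of_nonneg_right ((min_le_right _ _).trans (min_le_right _ _)) (hnn _)
    have hx2 : 2 * s * (r * (xt t ⬝ᵥ xt t)) ≤ 2 * s * (xt t ⬝ᵥ (R *ᵥ xt t)) :=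
      mul_le_mul_of_nonneg_left (hRr _) (by positivity)
    have hY' := mul_nonneg (mul_nonneg zero_le_two hκ.le) hY
    rw [hV'eq]
    simp only [hfdef]
    nlinarith
  have hV0 : ∀ t, 0 ≤ V t := fun t => by
    have := hPnn (e t); have := hPnn (eL t); have := hPnn (xt t)
    have : 0 ≤ ∑ i, ∑ j, Lam j j * Wt t i j ^ 2 := Finset.sum_nonneg fun i _ =>
      Finset.sum_nonneg fun j _ => mul_nonneg (hLam0 j).le (sq_nonneg _)
    positivity
  have hVle : ∀ t ≥ 0, V t ≤ V 0 := fun t ht =>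
    antitoneOn_Ici_of_hasDerivAt_nonpos hV
      (fun t _ => (hVf t).trans (neg_nonpos.2 (mul_nonneg hq0.le (hf0 t))))
      (Set.mem_Ici.2 le_rfl) ht ht
  obtain ⟨Cσ, hCσ⟩ := hσ
  have hbound : ∃ M, ∀ t ≥ 0, ‖e t‖ ≤ M ∧ ‖eL t‖ ≤ M ∧ ‖xt t‖ ≤ M ∧
      (∀ i j, ‖Wt t i j‖ ≤ M) ∧ ‖σx t‖ ≤ M := by
    set c : ℝ := min p (min (κ / η * p) (2 * s * p)) with hc
    have hc0 : 0 < c := by positivity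
    have hMi : ∀ (j : Fin m) t, t ≥ 0 → ∀ i, ‖Wt t i j‖ ≤ ∑ j, √(γ * V 0 / Lam j j) := by
      intro j t ht i
      refine le_trans ?_ (Finset.single_le_sum (f := fun j => √(γ * V 0 / Lam j j))
        (fun j _ => Real.sqrt_nonneg _) (Finset.mem_univ j))
      rw [Real.norm_eq_abs]
      refine Real.abs_le_sqrt ?_
      rw [le_div_iff₀ (hLam0 j), mul_comm, ← inv_mul_le_iff₀ hγ]
      have hi : ∀ i, 0 ≤ ∑ j, Lam j j * Wt t i j ^ 2 := fun i =>
        Finset.sum_nonneg fun j _ => mul_nonneg (hLam0 j).le (sq_nonneg _)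
      have hle : Lam j j * Wt t i j ^ 2 ≤ ∑ i, ∑ j, Lam j j * Wt t i j ^ 2 :=
        (Finset.single_le_sum (f := fun j => Lam j j * Wt t i j ^ 2)
          (fun j _ => mul_nonneg (hLam0 j).le (sq_nonneg _)) (Finset.mem_univ j)).trans
        (Finset.single_le_sum (f := fun i => ∑ j, Lam j j * Wt t i j ^ 2)
          (fun i _ => hi i) (Finset.mem_univ i))
      have hle' := mul_le_mul_of_nonneg_left hle (inv_nonneg.2 hγ.le)
      have hVt := hVle t ht
      have := hPnn (e t)
      have := mul_nonneg (div_pos hκ hη).le (hPnn (eL t))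
      have := mul_nonneg (mul_pos two_pos hs0).le (hPnn (xt t))
      refine hle'.trans (le_trans ?_ hVt)
      simp only [hVdef]
      linarith
    have hcf : ∀ t ≥ 0, f t ≤ V 0 / c := by
      intro t ht
      rw [le_div_iff₀ hc0, mul_comm]
      refine le_trans ?_ (hVle t ht)
      have hc1 : c * (e t ⬝ᵥ e t) ≤ e t ⬝ᵥ (P *ᵥ e t) :=
        (mul_le_mul_of_nonneg_right (min_le_left _ _) (hnn _)).trans (hPp _)
      have hc2 : c * (eL t ⬝ᵥ eL t) ≤ κ / η * (eL t ⬝ᵥ (P *ᵥ eL t)) := by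
        refine (mul_le_mul_of_nonneg_right
          ((min_le_right _ _).trans (min_le_left _ _)) (hnn _)).trans ?_
        rw [mul_assoc]
        exact mul_le_mul_of_nonneg_left (hPp _) (by positivity)
      have hc3 : c * (xt t ⬝ᵥ xt t) ≤ 2 * s * (xt t ⬝ᵥ (P *ᵥ xt t)) := by
        refine (mul_le_mul_of_nonneg_right
          ((min_le_right _ _).trans (min_le_right _ _)) (hnn _)).trans ?_
        rw [mul_assoc]
        exact mul_le_mul_of_nonneg_left (hPp _) (by positivity)
      have hc4 : 0 ≤ γ⁻¹ * ∑ i, ∑ j, Lam j j * Wt t i j ^ 2 :=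
        mul_nonneg (inv_nonneg.2 hγ.le) (Finset.sum_nonneg fun i _ =>
          Finset.sum_nonneg fun j _ => mul_nonneg (hLam0 j).le (sq_nonneg _))
      simp only [hfdef, hVdef]
      linarith
    have hσ' : ∀ t ≥ 0, ‖σx t‖ ≤ Cσ := fun t ht => by
      refine (norm_le_of_dotProduct_self_le (C := ∑ i, σx t i ^ 2) ?_).trans (hCσ t ht)
      simp [dotProduct, sq]
    refine ⟨max (√(V 0 / c)) (max (∑ j, √(γ * V 0 / Lam j j)) Cσ), fun t ht => ?_⟩
    have := hcf t ht
    simp only [hfdef] at this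
    refine ⟨le_max_of_le_left (norm_le_of_dotProduct_self_le ?_),
      le_max_of_le_left (norm_le_of_dotProduct_self_le ?_),
      le_max_of_le_left (norm_le_of_dotProduct_self_le ?_),
      fun i j => le_max_of_le_right (le_max_of_le_left (hMi j t ht i)),
      le_max_of_le_right (le_max_of_le_right (hσ' t ht))⟩ <;>
    linarith [hnn (e t), hnn (eL t), hnn (xt t)]
  obtain ⟨M, hM⟩ := hbound
  let G : (Fin n → ℝ) × (Fin n → ℝ) × (Fin n → ℝ) × (Fin N → Fin m → ℝ) × (Fin N → ℝ) → ℝ :=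
    fun z => 2 * (z.1 ⬝ᵥ (Ar *ᵥ z.1 - (B * Lam * (of z.2.2.2.1)ᵀ) *ᵥ z.2.2.2.2
        - κ • (z.1 - z.2.1)))
      + 2 * (z.2.1 ⬝ᵥ (Ar *ᵥ z.2.1 + η • (z.1 - z.2.1)))
      + 2 * (z.2.2.1 ⬝ᵥ (Ar *ᵥ z.2.2.1 + κ • (z.1 - z.2.1)))
  have hG : Continuous G := by
    have hof : Continuous fun z : (Fin n → ℝ) × (Fin n → ℝ) × (Fin n → ℝ) ×
        (Fin N → Fin m → ℝ) × (Fin N → ℝ) => (of z.2.2.2.1 : Matrix (Fin N) (Fin m) ℝ) :=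
      continuous_matrix fun i j => by simp only [of_apply]; fun_prop
    fun_prop
  obtain ⟨K, hK⟩ := (isCompact_closedBall (0 : (Fin n → ℝ) × (Fin n → ℝ) × (Fin n → ℝ) ×
    (Fin N → Fin m → ℝ) × (Fin N → ℝ)) M).exists_bound_of_continuousOn hG.continuousOn
  have hf : ∀ t ≥ 0, HasDerivAt f (G (e t, eL t, xt t, Wt t, σx t)) t := by
    intro t ht
    have h := (((he t ht).quadForm isHermitian_one).add ((heL t ht).quadForm isHermitian_one)).add
      ((hxt t ht).quadForm isHermitian_one)
    simp only [one_mulVec] at h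
    exact h
  have hG' : ∀ t ≥ 0, |G (e t, eL t, xt t, Wt t, σx t)| ≤ K := by
    intro t ht
    refine hK _ ?_
    obtain ⟨h1, h2, h3, h4, h5⟩ := hM t ht
    have hM0 : 0 ≤ M := (norm_nonneg _).trans h1
    rw [mem_closedBall_zero_iff]
    simp only [Prod.norm_def, sup_le_iff]
    exact ⟨h1, h2, h3, (pi_norm_le_iff_of_nonneg hM0).2 fun i =>
      (pi_norm_le_iff_of_nonneg hM0).2 (h4 i), h5⟩
  have hqf : Tendsto (fun t => q * f t) atTop (nhds 0) :=
    tendsto_zero_of_deriv_le_neg hV (fun t _ => hV0 t) (fun t _ => hVf t)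
      (fun t _ => mul_nonneg hq0.le (hf0 t)) (fun t ht => (hf t ht).const_mul q)
      (K := q * K) fun t ht => by
        rw [abs_mul, abs_of_pos hq0]
        exact mul_le_mul_of_nonneg_left (hG' t ht) hq0.le
  have hft : Tendsto f atTop (nhds 0) := by
    simpa [hq0.ne'] using hqf.const_mul q⁻¹
  have h1 : Tendsto e atTop (nhds 0) := tendsto_zero_of_dotProduct_self_le
    (fun t => by simp only [hfdef]; linarith [hnn (eL t), hnn (xt t)]) hft
  have h2 : Tendsto eL atTop (nhds 0) := tendsto_zero_of_dotProduct_self_le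
    (fun t => by simp only [hfdef]; linarith [hnn (e t), hnn (xt t)]) hft
  have h3 : Tendsto xt atTop (nhds 0) := tendsto_zero_of_dotProduct_self_le
    (fun t => by simp only [hfdef]; linarith [hnn (e t), hnn (eL t)]) hft
  exact ⟨h1, h2, h3, by simpa using h1.add h3⟩
end
end

section
/- (Asymptotic expansions in the proof of Theorem 6.1) There exist constants C > 0 and κ₀ > 0 such that for every κ ≥ κ₀ and every t ≥ 0, ‖e_{L,κ}(t)‖₂ ≤ C/κ and ‖e_κ(t) − e^{−κt} e₀‖₂ ≤ C/κ; that is, e(t, κ) = e^{−κt} e₀ + O(κ^{−1}) and e_L(t, κ) = O(κ^{−1}) uniformly in t ≥ 0 for sufficiently large κ. -/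
open Matrix Filter

noncomputable section

/-- The Euclidean norm dominates the sup norm. -/
lemma norm_le_norm2 {n : ℕ} (v : Fin n → ℝ) : ‖v‖ ≤ norm2 v := by
  refine (pi_norm_le_iff_of_nonneg (Real.sqrt_nonneg _)).2 fun i => ?_
  refine Real.abs_le_sqrt ?_
  exact Finset.single_le_sum (f := fun j => v j ^ 2) (fun j _ => sq_nonneg _) (Finset.mem_univ i)

/-- The Euclidean norm on `ℝⁿ` is at most `√n` times the sup norm. -/
lemma norm2_le_sqrt_mul_norm {n : ℕ} (v : Fin n → ℝ) : norm2 v ≤ √n * ‖v‖ := by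
  refine Real.sqrt_le_iff.2 ⟨by positivity, ?_⟩
  rw [mul_pow, Real.sq_sqrt (Nat.cast_nonneg n)]
  have h : ∀ i ∈ Finset.univ, v i ^ 2 ≤ ‖v‖ ^ 2 := fun i _ => by
    rw [← sq_abs]
    exact pow_le_pow_left₀ (abs_nonneg _) (norm_le_pi_norm v i) 2
  simpa using Finset.sum_le_card_nsmul _ _ _ h

lemma exists_norm_mulVec_le {𝕜 : Type*} [RCLike 𝕜] {n : ℕ} (N : Matrix (Fin n) (Fin n) 𝕜) :
    ∃ a ≥ (0 : ℝ), ∀ v, ‖N *ᵥ v‖ ≤ a * ‖v‖ :=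
  ⟨_, norm_nonneg _, fun v => (LinearMap.toContinuousLinearMap (Matrix.toLin' N)).le_opNorm v⟩

lemma HasDerivAt.const_mulVec {𝕜 : Type*} [RCLike 𝕜] {n : ℕ} (N : Matrix (Fin n) (Fin n) 𝕜)
    {y : ℝ → Fin n → 𝕜} {y' : Fin n → 𝕜} {t : ℝ} (hy : HasDerivAt y y' t) :
    HasDerivAt (fun s => N *ᵥ y s) (N *ᵥ y') t :=
  (((LinearMap.toContinuousLinearMap (Matrix.toLin' N)).restrictScalars ℝ).hasFDerivAt).comp_hasDerivAt
    t hy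

lemma HasDerivAt.ofReal_pi {n : ℕ} {y : ℝ → Fin n → ℝ} {y' : Fin n → ℝ} {t : ℝ}
    (hy : HasDerivAt y y' t) :
    HasDerivAt (fun s i => (y s i : ℂ)) (fun i => (y' i : ℂ)) t :=
  hasDerivAt_pi.2 fun i => ((hasDerivAt_pi.1 hy) i).ofReal_comp

lemma norm_ofReal_pi {n : ℕ} (v : Fin n → ℝ) : ‖fun i => (v i : ℂ)‖ = ‖v‖ := by
  simp [Pi.norm_def]

/-- A solution of `y' = μ y + h` with `Re μ < 0` stays bounded by `‖y 0‖ + H / |Re μ|` as long as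
the forcing `h` is bounded by `H`. -/
lemma norm_le_of_hasDerivAt_smul_add {E : Type*} [NormedAddCommGroup E] [NormedSpace ℂ E]
    {μ : ℂ} (hμ : μ.re < 0) {y h : ℝ → E} {H T : ℝ}
    (hy : ∀ t ∈ Set.Icc 0 T, HasDerivAt y (μ • y t + h t) t)
    (hh : ∀ t ∈ Set.Icc 0 T, ‖h t‖ ≤ H) {t : ℝ} (ht : t ∈ Set.Icc 0 T) :
    ‖y t‖ ≤ ‖y 0‖ + H / (-μ.re) := by
  have hc : 0 < -μ.re := neg_pos.2 hμ
  have hH : 0 ≤ H := (norm_nonneg _).trans (hh t ht)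
  have hexp : ∀ s : ℝ, ‖Complex.exp (-μ * s)‖ = Real.exp (-μ.re * s) := fun s => by
    simp [Complex.norm_exp]
  have hu : ∀ s ∈ Set.Icc 0 T,
      HasDerivAt (fun s : ℝ => Complex.exp (-μ * s) • y s) (Complex.exp (-μ * s) • h s) s := by
    intro s hs
    have h1 : HasDerivAt (fun s : ℝ => Complex.exp (-μ * s)) (Complex.exp (-μ * s) * -μ) s := by
      simpa using ((Complex.ofRealCLM.hasDerivAt (x := s)).const_mul (-μ)).cexp
    refine (h1.smul (hy s hs)).congr_deriv ?_
    module
  have hne : μ.re ≠ 0 := hμ.ne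
  have hB : ∀ s : ℝ, HasDerivAt
      (fun s => ‖y 0‖ + H / (-μ.re) * (Real.exp (-μ.re * s) - 1)) (H * Real.exp (-μ.re * s)) s := by
    intro s
    have h1 := ((((hasDerivAt_id s).const_mul (-μ.re)).exp.sub_const 1).const_mul
      (H / (-μ.re))).const_add ‖y 0‖
    refine h1.congr_deriv ?_
    simp only [id]
    field_simp
  have key := image_norm_le_of_norm_deriv_right_le_deriv_boundary
    (fun s hs => (hu s hs).continuousAt.continuousWithinAt)
    (fun s hs => (hu s (Set.Ico_subset_Icc_self hs)).hasDerivWithinAt)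
    (by simp) hB
    (fun s hs => by
      rw [norm_smul, hexp, mul_comm]
      exact mul_le_mul_of_nonneg_right (hh s (Set.Ico_subset_Icc_self hs)) (Real.exp_pos _).le) ht
  rw [norm_smul, hexp] at key
  have h1 : 1 ≤ Real.exp (-μ.re * t) := Real.one_le_exp (mul_nonneg hc.le ht.1)
  have h2 : 0 ≤ H / (-μ.re) := by positivity
  refine le_of_mul_le_mul_left (key.trans ?_) (Real.exp_pos (-μ.re * t))
  nlinarith [norm_nonneg (y 0)]

/-- Real-vector form of `norm_le_of_hasDerivAt_smul_add`. -/
lemma norm_le_of_hasDerivAt_neg_smul_add {n : ℕ} {c : ℝ} (hc : 0 < c) {y h : ℝ → Fin n → ℝ}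
    {H T : ℝ} (hy : ∀ t ∈ Set.Icc 0 T, HasDerivAt y (-c • y t + h t) t)
    (hh : ∀ t ∈ Set.Icc 0 T, ‖h t‖ ≤ H) {t : ℝ} (ht : t ∈ Set.Icc 0 T) :
    ‖y t‖ ≤ ‖y 0‖ + H / c := by
  have := norm_le_of_hasDerivAt_smul_add (μ := ((-c : ℝ) : ℂ)) (by simpa using hc)
    (y := fun s i => (y s i : ℂ)) (h := fun s i => (h s i : ℂ)) (H := H) (T := T)
    (fun s hs => by
      refine (hy s hs).ofReal_pi.congr_deriv ?_
      ext i
      simp)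
    (fun s hs => (norm_ofReal_pi _).trans_le (hh s hs)) ht
  simpa [norm_ofReal_pi] using this

/-- If `N ∏ (A - μ) = 0` over finitely many `μ` with negative real part, then `N y` is controlled
by the initial value and the forcing for every solution of `y' = A y + h`. -/
lemma exists_norm_mulVec_le_of_aeval_prod_eq_zero {n : ℕ} (A : Matrix (Fin n) (Fin n) ℂ)
    (s : Multiset ℂ) (hs : ∀ μ ∈ s, μ.re < 0) (N : Matrix (Fin n) (Fin n) ℂ)
    (hN : N * Polynomial.aeval A (s.map fun μ => Polynomial.X - Polynomial.C μ).prod = 0) :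
    ∃ K ≥ (0 : ℝ), ∀ (y h : ℝ → Fin n → ℂ) (H : ℝ), ‖y 0‖ ≤ H →
      (∀ t ≥ 0, HasDerivAt y (A *ᵥ y t + h t) t) → (∀ t ≥ 0, ‖h t‖ ≤ H) →
      ∀ t ≥ 0, ‖N *ᵥ y t‖ ≤ K * H := by
  induction s using Multiset.induction generalizing N with
  | empty =>
    obtain rfl : N = 0 := by simpa using hN
    exact ⟨0, le_rfl, by simp⟩
  | cons μ s ih =>
    have hμ : μ.re < 0 := hs μ (Multiset.mem_cons_self _ _)
    have hc : 0 < -μ.re := neg_pos.2 hμ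
    obtain ⟨K, hK, hKb⟩ := ih (fun ν hν => hs ν (Multiset.mem_cons_of_mem hν))
      (N * (A - μ • 1)) (by
        rw [← hN, Multiset.map_cons, Multiset.prod_cons, map_mul, ← mul_assoc]
        simp [Algebra.algebraMap_eq_smul_one])
    obtain ⟨a, ha, hab⟩ := exists_norm_mulVec_le N
    refine ⟨a + (K + a) / (-μ.re), by positivity, fun y h H h0 hy hh t ht => ?_⟩
    have key := norm_le_of_hasDerivAt_smul_add hμ (y := fun t => N *ᵥ y t)
      (h := fun t => (N * (A - μ • 1)) *ᵥ y t + N *ᵥ h t) (H := K * H + a * H) (T := t)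
      (fun r hr => by
        refine ((hy r hr.1).const_mulVec N).congr_deriv ?_
        simp only [← Matrix.mulVec_mulVec, Matrix.sub_mulVec, Matrix.mulVec_sub,
          Matrix.mulVec_add, Matrix.smul_mulVec, Matrix.mulVec_smul, Matrix.one_mulVec]
        abel)
      (fun r hr => (norm_add_le _ _).trans (add_le_add (hKb y h H h0 hy hh r hr.1)
        ((hab _).trans (mul_le_mul_of_nonneg_left (hh r hr.1) ha)))) ⟨ht, le_rfl⟩
    refine key.trans ?_
    have := (hab (y 0)).trans (mul_le_mul_of_nonneg_left h0 ha)
    calc _ ≤ a * H + (K * H + a * H) / (-μ.re) := by gcongr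
      _ = _ := by ring

/-- Bounded-input bounded-state stability of a linear system with Hurwitz matrix. -/
lemma Hurwitz.exists_norm_le {n : ℕ} {A : Matrix (Fin n) (Fin n) ℝ} (hA : Hurwitz A) :
    ∃ K ≥ (0 : ℝ), ∀ (y h : ℝ → Fin n → ℝ) (H : ℝ), ‖y 0‖ ≤ H →
      (∀ t ≥ 0, HasDerivAt y (A *ᵥ y t + h t) t) → (∀ t ≥ 0, ‖h t‖ ≤ H) →
      ∀ t ≥ 0, ‖y t‖ ≤ K * H := by
  set B := A.map Complex.ofReal with hB
  obtain ⟨K, hK, hKb⟩ := exists_norm_mulVec_le_of_aeval_prod_eq_zero B B.charpoly.roots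
    (fun μ hμ => hA μ (Polynomial.isRoot_of_mem_roots hμ)) 1 (by
      rw [← (IsAlgClosed.splits B.charpoly).eq_prod_roots_of_monic B.charpoly_monic,
        Matrix.aeval_self_charpoly, mul_zero])
  refine ⟨K, hK, fun y h H h0 hy hh t ht => ?_⟩
  have := hKb (fun s i => (y s i : ℂ)) (fun s i => (h s i : ℂ)) H
    ((norm_ofReal_pi _).trans_le h0)
    (fun s hs => by
      refine (hy s hs).ofReal_pi.congr_deriv ?_
      ext i
      simp [hB, Matrix.mulVec, dotProduct])
    (fun s hs => (norm_ofReal_pi _).trans_le (hh s hs)) t ht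
  simpa [norm_ofReal_pi] using this

theorem statement12
    {n : ℕ} (hn : 0 < n)
    (Ar : Matrix (Fin n) (Fin n) ℝ) (hAr : Hurwitz Ar)
    (η : ℝ) (hη : 0 ≤ η) (e0 : Fin n → ℝ) (M : ℝ) (hM : 0 < M)
    (f e eL : ℝ → ℝ → Fin n → ℝ)
    (hfc : ∀ κ > (0:ℝ), ContinuousOn (f κ) (Set.Ici 0))
    (hfb : ∀ κ > (0:ℝ), ∀ t ≥ (0:ℝ), norm2 (f κ t) ≤ M)
    (hei : ∀ κ > (0:ℝ), e κ 0 = e0) (heLi : ∀ κ > (0:ℝ), eL κ 0 = 0)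
    (he : ∀ κ > (0:ℝ), ∀ t ≥ (0:ℝ), HasDerivAt (e κ)
          (Ar *ᵥ e κ t - f κ t - κ • (e κ t - eL κ t)) t)
    (heL : ∀ κ > (0:ℝ), ∀ t ≥ (0:ℝ), HasDerivAt (eL κ)
          (Ar *ᵥ eL κ t + η • (e κ t - eL κ t)) t)
    : ∃ C > (0:ℝ), ∃ κ₀ > (0:ℝ), ∀ κ ≥ κ₀, ∀ t ≥ (0:ℝ),
      norm2 (eL κ t) ≤ C / κ
      ∧ norm2 (e κ t - Real.exp (-κ * t) • e0) ≤ C / κ := by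
  obtain ⟨a, ha, hab⟩ := exists_norm_mulVec_le Ar
  obtain ⟨K, hK, hKb⟩ := hAr.exists_norm_le
  set E : ℝ := 2 * (‖e0‖ + M) with hE
  have hE0 : 0 ≤ E := by positivity
  set C₁ : ℝ := K * (η * (‖e0‖ + M)) + η * E with hC₁
  set C₂ : ℝ := a * E + M + η * E with hC₂
  have hC₁0 : 0 ≤ C₁ := by positivity
  have hC₂0 : 0 ≤ C₂ := by positivity
  refine ⟨√n * (C₁ + C₂) + 1, by positivity, 2 * a + 1, by positivity, fun κ hκ t ht => ?_⟩
  have hκ0 : 0 < κ := by linarith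
  have hc : 0 < κ + η := by linarith
  have hf : ∀ s ≥ (0 : ℝ), ‖f κ s‖ ≤ M := fun s hs => (norm_le_norm2 _).trans (hfb κ hκ0 s hs)
  set eH : ℝ → Fin n → ℝ := fun s => e κ s - eL κ s with heH
  have heH0 : eH 0 = e0 := by simp [heH, hei κ hκ0, heLi κ hκ0]
  have heHd : ∀ s ≥ (0 : ℝ),
      HasDerivAt eH (-(κ + η) • eH s + (Ar *ᵥ eH s - f κ s)) s := fun s hs => by
    refine ((he κ hκ0 s hs).sub (heL κ hκ0 s hs)).congr_deriv ?_
    simp only [heH, Matrix.mulVec_sub]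
    module
  have heHb : ∀ s ≥ (0 : ℝ), ‖eH s‖ ≤ E := fun T hT => by
    obtain ⟨r, hr, hmax⟩ := isCompact_Icc.exists_isMaxOn (Set.nonempty_Icc.2 hT)
      (f := fun s => ‖eH s‖)
      (fun s hs => (heHd s hs.1).continuousAt.norm.continuousWithinAt)
    refine (hmax (Set.right_mem_Icc.2 hT)).trans ?_
    have h1 := norm_le_of_hasDerivAt_neg_smul_add hc (H := a * ‖eH r‖ + M)
      (fun s hs => heHd s hs.1)
      (fun s hs => (norm_sub_le _ _).trans (add_le_add
        ((hab _).trans (mul_le_mul_of_nonneg_left (hmax hs) ha)) (hf s hs.1))) hr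
    rw [heH0] at h1
    have h2 : (a * ‖eH r‖ + M) / (κ + η) ≤ ‖eH r‖ / 2 + M := by
      rw [div_le_iff₀ hc]
      nlinarith [norm_nonneg (eH r), mul_nonneg (norm_nonneg (eH r))
        (by linarith : 0 ≤ κ + η - 2 * a), mul_nonneg hM.le (by linarith : 0 ≤ κ + η - 1)]
    change ‖eH r‖ ≤ E
    linarith
  have hε : η / (κ + η) ≤ η / κ := by gcongr; linarith
  have hε0 : 0 ≤ η / (κ + η) := by positivity
  have hεs : ∀ v : Fin n → ℝ, ∀ b : ℝ, ‖v‖ ≤ b → ‖(η / (κ + η)) • v‖ ≤ η / κ * b :=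
    fun v b hv => by
      rw [norm_smul, Real.norm_of_nonneg hε0]
      gcongr
  -- The combination `eL + η / (κ + η) • eH` cancels the fast forcing of the filter.
  have hw : ‖eL κ t + (η / (κ + η)) • eH t‖ ≤ K * (η / κ * (‖e0‖ + M)) := by
    refine hKb (fun s => eL κ s + (η / (κ + η)) • eH s) (fun s => (η / (κ + η)) • -f κ s) _ ?_ ?_ ?_
      t ht
    · simp only [heH0, heLi κ hκ0, zero_add]
      exact hεs _ _ (by linarith)
    · intro s hs
      refine ((heL κ hκ0 s hs).add ((heHd s hs).const_smul (η / (κ + η)))).congr_deriv ?_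
      have : (η / (κ + η)) • -(κ + η) • eH s = -(η • eH s) := by
        rw [smul_smul, ← neg_smul]
        congr 1
        field_simp
      rw [smul_add, this, Matrix.mulVec_add, Matrix.mulVec_smul]
      simp only [heH]
      module
    · intro s hs
      refine hεs _ _ ?_
      rw [norm_neg]
      linarith [hf s hs, norm_nonneg e0]
  have hL : ‖eL κ t‖ ≤ C₁ / κ := by
    calc ‖eL κ t‖ = ‖(eL κ t + (η / (κ + η)) • eH t) - (η / (κ + η)) • eH t‖ := by
          rw [add_sub_cancel_right]
      _ ≤ K * (η / κ * (‖e0‖ + M)) + η / κ * E :=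
          (norm_sub_le _ _).trans (add_le_add hw (hεs _ _ (heHb t ht)))
      _ = C₁ / κ := by rw [hC₁]; ring
  have hd : ‖eH t - Real.exp (-κ * t) • e0‖ ≤ C₂ / κ := by
    have h1 := norm_le_of_hasDerivAt_neg_smul_add hκ0
      (y := fun s => eH s - Real.exp (-κ * s) • e0)
      (h := fun s => Ar *ᵥ eH s - f κ s - η • eH s) (H := C₂) (T := t)
      (fun s hs => by
        have h2 : HasDerivAt (fun s => Real.exp (-κ * s)) (Real.exp (-κ * s) * -κ) s := by
          simpa using ((hasDerivAt_id s).const_mul (-κ)).exp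
        refine ((heHd s hs.1).sub (h2.smul_const e0)).congr_deriv ?_
        module)
      (fun s hs => by
        refine (norm_sub_le _ _).trans (add_le_add ((norm_sub_le _ _).trans (add_le_add
          ((hab _).trans (mul_le_mul_of_nonneg_left (heHb s hs.1) ha)) (hf s hs.1))) ?_)
        rw [norm_smul, Real.norm_of_nonneg hη]
        exact mul_le_mul_of_nonneg_left (heHb s hs.1) hη)
      ⟨ht, le_rfl⟩
    simpa [heH0] using h1
  have hfin : ∀ v : Fin n → ℝ, ‖v‖ ≤ (C₁ + C₂) / κ →
      norm2 v ≤ (√n * (C₁ + C₂) + 1) / κ := fun v hv => by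
    calc norm2 v ≤ √n * ((C₁ + C₂) / κ) :=
          (norm2_le_sqrt_mul_norm v).trans (mul_le_mul_of_nonneg_left hv (Real.sqrt_nonneg _))
      _ = (√n * (C₁ + C₂)) / κ := by ring
      _ ≤ _ := by gcongr; linarith
  refine ⟨hfin _ (hL.trans (by gcongr; linarith)), hfin _ ?_⟩
  calc ‖e κ t - Real.exp (-κ * t) • e0‖ = ‖eL κ t + (eH t - Real.exp (-κ * t) • e0)‖ := by
        congr 1
        simp only [heH]
        abel
    _ ≤ C₁ / κ + C₂ / κ := (norm_add_le _ _).trans (add_le_add hL hd)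
    _ = _ := by ring
end
end
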